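/- Achievability for the classical-quantum multiple-access channel (multiple-access phase): Let W : Y₁ × Y₂ → S(H) be a classical-quantum multiple-access channel with finite input alphabets Y₁, Y₂, and let Q₁ and Q₂ be probability distributions on Y₁ and Y₂ respectively. Suppose the pair of nonnegative reals (R₁, R₂) satisfies R₁ ≤ I₁ := Σ_{y₂} Q₂(y₂) χ(Q₁; W(·, y₂)), R₂ ≤ I₂ := Σ_{y₁} Q₁(y₁) χ(Q₂; W(y₁, ·)), and R₁ + R₂ ≤ I₁₂ := χ(Q₁×Q₂; W) (where W is regarded as a cq channel with input alphabet Y₁×Y₂). Then for every ε > 0 and δ > 0, for all sufficiently large n there exists an (n, J₁, J₂) MAC code with (1/n)·log₂ J₁ ≥ R₁ − δ, (1/n)·log₂ J₂ ≥ R₂ − δ, and average error at most ε. -/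

import Mathlib

open scoped BigOperators ComplexOrder

noncomputable section

/-- The Loewner order on operators: `A ≤ B` iff `B - A` is positive semidefinite. -/
def loewnerLE {ι : Type*} [Fintype ι] (A B : Matrix ι ι ℂ) : Prop := (B - A).PosSemidef

/-- A quantum state: a positive semidefinite operator with unit trace. -/
def IsState {ι : Type*} [Fintype ι] (ρ : Matrix ι ι ℂ) : Prop := ρ.PosSemidef ∧ ρ.trace = 1

/-- The von Neumann entropy `S(ρ) = −tr(ρ log₂ ρ)`, computed via eigenvalues. -/
noncomputable def vnEntropy {ι : Type*} [Fintype ι] [DecidableEq ι] (ρ : Matrix ι ι ℂ) : ℝ :=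
  if h : ρ.IsHermitian then -∑ i, h.eigenvalues i * Real.logb 2 (h.eigenvalues i) else 0

/-- The trace norm `‖A‖₁ = tr √(AᴴA)` (sum of singular values). -/
noncomputable def traceNorm {ι : Type*} [Fintype ι] [DecidableEq ι] (A : Matrix ι ι ℂ) : ℝ :=
  ∑ i, Real.sqrt ((Matrix.posSemidef_conjTranspose_mul_self A).1.eigenvalues i)

/-- A probability distribution on a finite set. -/
def IsDist {A : Type*} [Fintype A] (P : A → ℝ) : Prop := (∀ a, 0 ≤ P a) ∧ ∑ a, P a = 1

/-- The Holevo quantity `χ(P;W) = S(PW) − Σ_a P(a) S(W(a))`. -/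
noncomputable def holevo {A ι : Type*} [Fintype A] [Fintype ι] [DecidableEq ι]
    (P : A → ℝ) (W : A → Matrix ι ι ℂ) : ℝ :=
  vnEntropy (∑ a, (P a : ℂ) • W a) - ∑ a, P a * vnEntropy (W a)

/-- Tensor product `M 0 ⊗ ⋯ ⊗ M (n−1)` of matrices, realized on the index set `Fin n → ι`. -/
def tensorPow {n : ℕ} {ι : Type*} [Fintype ι] (M : Fin n → Matrix ι ι ℂ) :
    Matrix (Fin n → ι) (Fin n → ι) ℂ :=
  Matrix.of fun i j => ∏ k, M k (i k) (j k)

/-- The `n`-fold extension `W^{⊗n}(xⁿ) = W(x₁) ⊗ ⋯ ⊗ W(xₙ)` of a cq channel. -/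
def cqPow {A ι : Type*} [Fintype ι] (W : A → Matrix ι ι ℂ) (n : ℕ) (x : Fin n → A) :
    Matrix (Fin n → ι) (Fin n → ι) ℂ :=
  tensorPow fun k => W (x k)

/-- A POVM: positive semidefinite operators summing to at most the identity. -/
def IsPOVM {ι J : Type*} [Fintype ι] [DecidableEq ι] [Fintype J] (D : J → Matrix ι ι ℂ) : Prop :=
  (∀ j, (D j).PosSemidef) ∧ loewnerLE (∑ j, D j) 1

/-- Existence of an `(n, J₁, J₂)` bidirectional broadcast code for the cq channels `W₁`, `W₂`
with average errors `e₁ ≤ ε₁` and `e₂ ≤ ε₂`. -/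
def BroadcastCodeExists {A ι₁ ι₂ : Type*} [Fintype A] [Fintype ι₁] [DecidableEq ι₁]
    [Fintype ι₂] [DecidableEq ι₂]
    (W1 : A → Matrix ι₁ ι₁ ℂ) (W2 : A → Matrix ι₂ ι₂ ℂ)
    (n J1 J2 : ℕ) (ε₁ ε₂ : ℝ) : Prop :=
  ∃ (w : Fin J1 × Fin J2 → Fin n → A)
    (D1 : Fin J2 → Fin J1 → Matrix (Fin n → ι₁) (Fin n → ι₁) ℂ)
    (D2 : Fin J1 → Fin J2 → Matrix (Fin n → ι₂) (Fin n → ι₂) ℂ),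
    (∀ m2, IsPOVM (D1 m2)) ∧ (∀ m1, IsPOVM (D2 m1)) ∧
    (∀ m2, ((J1 : ℝ))⁻¹ * ∑ m1, ((1 - D1 m2 m1) * cqPow W1 n (w (m1, m2))).trace.re ≤ ε₁) ∧
    (∀ m1, ((J2 : ℝ))⁻¹ * ∑ m2, ((1 - D2 m1 m2) * cqPow W2 n (w (m1, m2))).trace.re ≤ ε₂)


/-- Existence of an `(n, J₁, J₂)` code for the cq multiple-access channel `W`
with average error at most `ε`. -/
def MACCodeExists {Y1 Y2 ι : Type*} [Fintype ι] [DecidableEq ι]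
    (W : Y1 → Y2 → Matrix ι ι ℂ) (n J1 J2 : ℕ) (ε : ℝ) : Prop :=
  ∃ (u : Fin J1 → Fin n → Y1) (v : Fin J2 → Fin n → Y2)
    (D : Fin J1 × Fin J2 → Matrix (Fin n → ι) (Fin n → ι) ℂ),
    IsPOVM D ∧
    (1 / ((J1 : ℝ) * (J2 : ℝ))) * ∑ m : Fin J1 × Fin J2,
      ((1 - D m) * tensorPow (fun k => W (u m.1 k) (v m.2 k))).trace.re ≤ ε

end

/-!
By successive decoding one reaches the corner `(χ(Q₁; W Q₂), I₂)` of the pentagon. Draw both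
codebooks i.i.d. The first message is read off with a square-root measurement built from tests that
sandwich the large-eigenvalue projection of a signal between small-eigenvalue projections of the
average output; the Hayashi–Nagaoka inequality bounds its mean error, because a wrong codeword is
independent of the signal and therefore meets only the average state. Measuring gently, the second
message is then decoded given the first codeword. Since the spectrum of a product state is the
product distribution of the spectra of its factors, the weak law of large numbers shows that at
block length `n` the relevant eigenvalues are `2^{-nS}` up to `2^{±nδ}`, so that the error vanishes
below the Holevo rates.

By the chain rule for the Holevo quantity this corner and its mirror image both lie on the line
`R₁ + R₂ = I₁₂`. Concatenating codes for the two corners (time sharing) gives every point between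
them, and these points dominate the whole region.
-/

noncomputable section

open Matrix Filter
open scoped MatrixOrder Matrix.Norms.L2Operator Kronecker Topology

section Means

variable {X Y E : Type*} [Fintype X] [Fintype Y] [AddCommGroup E] [Module ℝ E]

/-- The mean of `f` under the weights `P`. It serves for the expectation of a random variable as
well as for the average state `PV` of a cq channel `V`. -/
def mean (P : X → ℝ) (f : X → E) : E := ∑ x, P x • f x

lemma mean_add (P : X → ℝ) (f g : X → E) :
    mean P (fun x => f x + g x) = mean P f + mean P g := by
  simp only [mean, smul_add, Finset.sum_add_distrib]

lemma mean_sub (P : X → ℝ) (f g : X → E) :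
    mean P (fun x => f x - g x) = mean P f - mean P g := by
  simp only [mean, smul_sub, Finset.sum_sub_distrib]

lemma mean_const_mul (P : X → ℝ) (a : ℝ) (f : X → ℝ) :
    mean P (fun x => a * f x) = a * mean P f := by
  simp only [mean, Finset.mul_sum, smul_eq_mul, mul_left_comm]

lemma mean_sum {J : Type*} (P : X → ℝ) (s : Finset J) (f : J → X → E) :
    mean P (fun x => ∑ j ∈ s, f j x) = ∑ j ∈ s, mean P (f j) := by
  simp only [mean, Finset.smul_sum]
  exact Finset.sum_comm

lemma mean_comm (P : X → ℝ) (Q : Y → ℝ) (f : X → Y → E) :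
    mean P (fun x => mean Q (f x)) = mean Q fun y => mean P fun x => f x y := by
  simp only [mean, Finset.smul_sum]
  rw [Finset.sum_comm]
  exact Finset.sum_congr rfl fun y _ => Finset.sum_congr rfl fun x _ => smul_comm _ _ _

lemma mean_prod (P : X → ℝ) (K : X → Y → ℝ) (f : X × Y → E) :
    mean (fun p : X × Y => P p.1 * K p.1 p.2) f =
      mean P fun x => mean (K x) fun y => f (x, y) := by
  simp only [mean, Finset.smul_sum, smul_smul, Fintype.sum_prod_type]

lemma map_mean {F : Type*} [AddCommGroup F] [Module ℝ F] (L : E →ₗ[ℝ] F) (P : X → ℝ) (f : X → E) :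
    L (mean P f) = mean P fun x => L (f x) := by
  simp only [mean, map_sum, map_smul]

lemma mean_equiv (e : X ≃ Y) (P : Y → ℝ) (f : Y → E) :
    mean (fun x => P (e x)) (fun x => f (e x)) = mean P f :=
  e.sum_comp fun y => P y • f y

namespace IsDist

variable {P : X → ℝ}

lemma mean_const (hP : IsDist P) (a : E) : mean P (fun _ => a) = a := by
  rw [mean, ← Finset.sum_smul, hP.2, one_smul]

lemma mean_mono_of_pos (hP : IsDist P) {f g : X → ℝ} (h : ∀ x, 0 < P x → f x ≤ g x) :
    mean P f ≤ mean P g := by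
  refine Finset.sum_le_sum fun x _ => ?_
  rcases (hP.1 x).eq_or_lt with hx | hx
  · simp only [← hx, zero_smul, le_refl]
  · exact mul_le_mul_of_nonneg_left (h x hx) hx.le

lemma mean_mono (hP : IsDist P) {f g : X → ℝ} (h : ∀ x, f x ≤ g x) : mean P f ≤ mean P g :=
  hP.mean_mono_of_pos fun x _ => h x

lemma exists_le_mean (hP : IsDist P) (f : X → ℝ) : ∃ x, f x ≤ mean P f := by
  by_contra! hlt
  obtain ⟨x, -, hx⟩ : ∃ x ∈ Finset.univ, P x ≠ 0 :=
    Finset.exists_ne_zero_of_sum_ne_zero (by simp [hP.2])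
  have hmean : mean P (fun _ => mean P f) < mean P f :=
    Finset.sum_lt_sum (fun y _ => mul_le_mul_of_nonneg_left (hlt y).le (hP.1 y))
      ⟨x, Finset.mem_univ x, mul_lt_mul_of_pos_left (hlt x) ((hP.1 x).lt_of_ne' hx)⟩
  rw [hP.mean_const] at hmean
  exact hmean.false

lemma prod (hP : IsDist P) {K : X → Y → ℝ} (hK : ∀ x, IsDist (K x)) :
    IsDist fun p : X × Y => P p.1 * K p.1 p.2 := by
  refine ⟨fun p => mul_nonneg (hP.1 _) ((hK _).1 _), ?_⟩
  simp only [Fintype.sum_prod_type, ← Finset.mul_sum, (hK _).2, mul_one, hP.2]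

end IsDist

variable {M : Type*} [Fintype M]

/-- The distribution of a family of independent letters, indexed by `M`, each drawn from `P`.
Random codebooks and random codewords are both of this form. -/
def iidDist (P : X → ℝ) (c : M → X) : ℝ := ∏ i, P (c i)

lemma IsDist.pi [DecidableEq M] {K : M → X → ℝ} (hK : ∀ i, IsDist (K i)) :
    IsDist fun c : M → X => ∏ i, K i (c i) := by
  refine ⟨fun c => Finset.prod_nonneg fun i _ => (hK i).1 _, ?_⟩
  simp only [← Fintype.piFinset_univ, ← Finset.prod_univ_sum, (hK _).2, Finset.prod_const_one]

lemma IsDist.iid [DecidableEq M] {P : X → ℝ} (hP : IsDist P) : IsDist (iidDist (M := M) P) :=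
  .pi fun _ => hP

lemma mean_iidDist_split [DecidableEq M] (P : X → ℝ) (i : M) (f : (M → X) → E) :
    mean (iidDist P) f =
      mean P fun x => mean (iidDist P) fun c => f ((Equiv.funSplitAt i X).symm (x, c)) := by
  rw [← mean_prod P (fun _ => iidDist P) fun p => f ((Equiv.funSplitAt i X).symm p),
    ← mean_equiv (Equiv.funSplitAt i X)]
  simp only [Equiv.symm_apply_apply]
  congr 1
  funext c
  exact Fintype.prod_eq_mul_prod_subtype_ne (fun j => P (c j)) i

lemma IsDist.mean_iidDist_apply [DecidableEq M] {P : X → ℝ} (hP : IsDist P) (i : M) (f : X → E) :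
    mean (iidDist P) (fun c => f (c i)) = mean P f := by
  rw [mean_iidDist_split P i]
  simp only [Equiv.funSplitAt, Equiv.piSplitAt_symm_apply, dite_true, hP.iid.mean_const]

lemma IsDist.mean_iidDist_apply₂ [DecidableEq M] {P : X → ℝ} (hP : IsDist P) {i j : M} (hij : i ≠ j)
    (f : X → X → E) :
    mean (iidDist P) (fun c => f (c i) (c j)) = mean P fun x => mean P (f x) := by
  rw [mean_iidDist_split P i]
  simp only [Equiv.funSplitAt, Equiv.piSplitAt_symm_apply, dite_true, dif_neg hij.symm]
  exact congrArg (mean P) (funext fun x =>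
    hP.mean_iidDist_apply (M := {k // k ≠ i}) ⟨j, hij.symm⟩ (f x))

lemma mean_iidDist_prod [DecidableEq M] (P : X → ℝ) (K : X → Y → ℝ) (f : (M → X × Y) → E) :
    mean (iidDist fun p : X × Y => P p.1 * K p.1 p.2) f =
      mean (iidDist P) fun x : M → X =>
        mean (fun y : M → Y => ∏ i, K (x i) (y i)) fun y => f fun i => (x i, y i) := by
  rw [← mean_prod (iidDist P) (fun x (y : M → Y) => ∏ i, K (x i) (y i))
    fun p => f fun i => (p.1 i, p.2 i),
    ← mean_equiv (Equiv.arrowProdEquivProdArrow M (fun _ => X) fun _ => Y)]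
  simp only [Equiv.arrowProdEquivProdArrow, Equiv.coe_fn_mk, iidDist, ← Finset.prod_mul_distrib]
  rfl

end Means

section OperatorInequalities

lemma mul_self_le_self_of_le_one {R : Type*} [Ring R] [PartialOrder R] [StarRing R]
    [StarOrderedRing R] {M : R} (h0 : 0 ≤ M) (h1 : M ≤ 1) : M * M ≤ M := by
  have hsplit : M - M * M = M * (1 - M) * M + (1 - M) * M * (1 - M) := by noncomm_ring
  rw [← sub_nonneg, hsplit]
  exact add_nonneg (conjugate_nonneg_of_nonneg (sub_nonneg.2 h1) h0)
    (conjugate_nonneg_of_nonneg h0 (sub_nonneg.2 h1))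

variable {κ : Type*} [Fintype κ] [DecidableEq κ]

/-- The gentle operator inequality. The cross terms of `1 - K * M * K` are absorbed by the square
of `t • M - (1 - K)`. -/
lemma one_sub_conjugate_le {K M : Matrix κ κ ℂ} (hK0 : 0 ≤ K) (hK1 : K ≤ 1) (hM0 : 0 ≤ M)
    (hM1 : M ≤ 1) {t : ℝ} (ht : 0 < t) :
    1 - K * M * K ≤ (1 - M) + t • (1 : Matrix κ κ ℂ) + t⁻¹ • (1 - K * K) := by
  have hN : 0 ≤ 1 - K := sub_nonneg.2 hK1
  have hself : IsSelfAdjoint (t • M - (1 - K)) :=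
    ((IsSelfAdjoint.all t).smul (.of_nonneg hM0)).sub (.of_nonneg hN)
  have hsq : 0 ≤ t⁻¹ • ((t • M - (1 - K)) * (t • M - (1 - K))) :=
    smul_nonneg (inv_nonneg.2 ht.le) hself.mul_self_nonneg
  have hMM : 0 ≤ t • ((1 - M) + (M - M * M)) :=
    smul_nonneg ht.le (add_nonneg (sub_nonneg.2 hM1)
      (sub_nonneg.2 (mul_self_le_self_of_le_one hM0 hM1)))
  have hKK : 0 ≤ (2 * t⁻¹) • (K - K * K) :=
    smul_nonneg (by positivity) (sub_nonneg.2 (mul_self_le_self_of_le_one hK0 hK1))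
  rw [← sub_nonneg]
  convert add_nonneg (add_nonneg hsq hMM) (add_nonneg hKK (conjugate_nonneg_of_nonneg hM0 hN))
    using 1
  simp only [sub_mul, mul_sub, smul_mul_assoc, mul_smul_comm, one_mul, mul_one]
  match_scalars <;> field_simp <;> ring

variable {J : Type*} [Fintype J]

/-- The normalisation `(∑ T_j + η)^{-1/2}` of the square-root measurement of the tests `T`; the
regularisation `η > 0` makes the operator under the root invertible. -/
def sqrtNormalizer (η : ℝ) (T : J → Matrix κ κ ℂ) : Matrix κ κ ℂ :=
  (CFC.sqrt (∑ j, T j + η • 1))⁻¹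

/-- The square-root (pretty good) measurement of the tests `T`, regularised by `η`. -/
def sqrtMeasurement (η : ℝ) (T : J → Matrix κ κ ℂ) (j : J) : Matrix κ κ ℂ :=
  sqrtNormalizer η T * T j * sqrtNormalizer η T

variable {η : ℝ} {T : J → Matrix κ κ ℂ}

lemma sqrtNormalizer_nonneg : 0 ≤ sqrtNormalizer η T :=
  (CFC.sqrt_nonneg _).posSemidef.inv.nonneg

lemma sqrtMeasurement_nonneg (hT0 : ∀ j, 0 ≤ T j) (j : J) : 0 ≤ sqrtMeasurement η T j :=
  conjugate_nonneg_of_nonneg (hT0 j) sqrtNormalizer_nonneg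

lemma sum_add_smul_one_nonneg (hT0 : ∀ j, 0 ≤ T j) (hη : 0 ≤ η) : 0 ≤ ∑ j, T j + η • 1 :=
  add_nonneg (Finset.sum_nonneg fun j _ => hT0 j) (smul_nonneg hη zero_le_one)

lemma isUnit_det_sqrt_sum_add_smul_one (hT0 : ∀ j, 0 ≤ T j) (hη : 0 < η) :
    IsUnit (CFC.sqrt (∑ j, T j + η • 1)).det := by
  have hpos : (∑ j, T j + η • 1).PosDef :=
    Matrix.PosDef.posSemidef_add (Finset.sum_nonneg fun j _ => hT0 j).posSemidef
      (Matrix.PosDef.one.smul hη)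
  have hdet := hpos.det_pos.ne'
  rw [← CFC.sqrt_mul_sqrt_self _ (sum_add_smul_one_nonneg hT0 hη.le), Matrix.det_mul] at hdet
  exact (left_ne_zero_of_mul hdet).isUnit

lemma sqrtNormalizer_mul (hT0 : ∀ j, 0 ≤ T j) (hη : 0 < η) :
    sqrtNormalizer η T * (∑ j, T j + η • 1) = CFC.sqrt (∑ j, T j + η • 1) := by
  conv_lhs => rw [← CFC.sqrt_mul_sqrt_self _ (sum_add_smul_one_nonneg hT0 hη.le)]
  exact Matrix.nonsing_inv_mul_cancel_left _ _ (isUnit_det_sqrt_sum_add_smul_one hT0 hη)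

lemma mul_sqrtNormalizer (hT0 : ∀ j, 0 ≤ T j) (hη : 0 < η) :
    (∑ j, T j + η • 1) * sqrtNormalizer η T = CFC.sqrt (∑ j, T j + η • 1) := by
  conv_lhs => rw [← CFC.sqrt_mul_sqrt_self _ (sum_add_smul_one_nonneg hT0 hη.le)]
  exact Matrix.mul_nonsing_inv_cancel_right _ _ (isUnit_det_sqrt_sum_add_smul_one hT0 hη)

lemma sqrt_mul_sqrtNormalizer (hT0 : ∀ j, 0 ≤ T j) (hη : 0 < η) :
    CFC.sqrt (∑ j, T j + η • 1) * sqrtNormalizer η T = 1 :=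
  Matrix.mul_nonsing_inv _ (isUnit_det_sqrt_sum_add_smul_one hT0 hη)

lemma sum_sqrtMeasurement_le_one (hT0 : ∀ j, 0 ≤ T j) (hη : 0 < η) :
    ∑ j, sqrtMeasurement η T j ≤ 1 := by
  calc ∑ j, sqrtMeasurement η T j
      = sqrtNormalizer η T * (∑ j, T j) * sqrtNormalizer η T := by
        simp only [sqrtMeasurement, Finset.mul_sum, Finset.sum_mul]
    _ ≤ sqrtNormalizer η T * (∑ j, T j + η • 1) * sqrtNormalizer η T :=
        conjugate_le_conjugate_of_nonneg
          (le_add_of_nonneg_right (smul_nonneg hη.le zero_le_one)) sqrtNormalizer_nonneg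
    _ = 1 := by rw [sqrtNormalizer_mul hT0 hη, sqrt_mul_sqrtNormalizer hT0 hη]

lemma test_le_sqrt_sum_add_smul_one (hT0 : ∀ j, 0 ≤ T j) (hη : 0 ≤ η) {j : J} (hT1 : T j ≤ 1) :
    T j ≤ CFC.sqrt (∑ j, T j + η • 1) := by
  have hle : T j * T j ≤ ∑ j, T j + η • 1 :=
    calc T j * T j ≤ T j := mul_self_le_self_of_le_one (hT0 j) hT1
      _ ≤ ∑ j, T j := Finset.single_le_sum (fun i _ => hT0 i) (Finset.mem_univ j)
      _ ≤ ∑ j, T j + η • 1 := le_add_of_nonneg_right (smul_nonneg hη zero_le_one)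
  simpa only [CFC.sqrt_mul_self _ (hT0 j)] using CFC.sqrt_le_sqrt _ _ hle

/-- The Hayashi–Nagaoka inequality. With `A` the normalizer, `S = A⁻²` the sum of the tests and
`U = S - T j`, the difference of the two sides is
`(A - 2) U (A - 2) + 2 (A - 1) T_j (A - 1) + 4 (√S - T_j)`. -/
lemma one_sub_sqrtMeasurement_le [DecidableEq J] (hT0 : ∀ j, 0 ≤ T j) (hη : 0 < η) {j : J}
    (hT1 : T j ≤ 1) :
    1 - sqrtMeasurement η T j ≤
      (2 : ℝ) • (1 - T j) + (4 : ℝ) • (∑ i ∈ Finset.univ.erase j, T i + η • 1) := by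
  have hrest : ∑ i ∈ Finset.univ.erase j, T i + η • 1 = ∑ i, T i + η • 1 - T j := by
    rw [← Finset.add_sum_erase _ T (Finset.mem_univ j)]; abel
  have hrest0 : 0 ≤ ∑ i, T i + η • 1 - T j := hrest ▸
    add_nonneg (Finset.sum_nonneg fun i _ => hT0 i) (smul_nonneg hη.le zero_le_one)
  have hA : IsSelfAdjoint (sqrtNormalizer η T) := .of_nonneg sqrtNormalizer_nonneg
  have hroot := test_le_sqrt_sum_add_smul_one hT0 hη.le hT1
  have hAS := sqrtNormalizer_mul hT0 hη
  have hSA := mul_sqrtNormalizer hT0 hη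
  have hQA := sqrt_mul_sqrtNormalizer hT0 hη
  rw [hrest, ← sub_nonneg, sqrtMeasurement]
  generalize sqrtNormalizer η T = A, ∑ i, T i + η • 1 = S at *
  have hA1 : IsSelfAdjoint (A - 1) := hA.sub (.one _)
  have hA2 : IsSelfAdjoint (A - (2 : ℝ) • 1) := hA.sub ((IsSelfAdjoint.all (2 : ℝ)).smul (.one _))
  convert add_nonneg (add_nonneg (hA2.conjugate_nonneg hrest0)
    (smul_nonneg (zero_le_two (α := ℝ)) (hA1.conjugate_nonneg (hT0 j))))
    (smul_nonneg (zero_le_four (α := ℝ)) (sub_nonneg.2 hroot)) using 1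
  simp only [sub_mul, mul_sub, smul_mul_assoc, mul_smul_comm, one_mul, mul_one, hAS, hSA, hQA]
  match_scalars <;> ring

end OperatorInequalities

section BornRule

variable {κ : Type*} [Fintype κ]

/-- The probability `tr (A ρ)` of the effect `A` in the state `ρ`, as a bilinear form. -/
def bornProb : Matrix κ κ ℂ →ₗ[ℝ] Matrix κ κ ℂ →ₗ[ℝ] ℝ :=
  LinearMap.mk₂ ℝ (fun A ρ => (A * ρ).trace.re) (by simp [add_mul]) (by simp) (by simp [mul_add])
    (by simp)

lemma bornProb_apply (A ρ : Matrix κ κ ℂ) : bornProb A ρ = (A * ρ).trace.re := rfl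

lemma bornProb_nonneg {A ρ : Matrix κ κ ℂ} (hA : 0 ≤ A) (hρ : 0 ≤ ρ) : 0 ≤ bornProb A ρ := by
  classical
  have hconj := conjugate_nonneg_of_nonneg hA (CFC.sqrt_nonneg ρ)
  rw [bornProb_apply, ← CFC.sqrt_mul_sqrt_self ρ hρ, ← mul_assoc, trace_mul_comm, ← mul_assoc]
  exact (Complex.le_def.1 hconj.posSemidef.trace_nonneg).1

lemma bornProb_mono_left {A B ρ : Matrix κ κ ℂ} (hAB : A ≤ B) (hρ : 0 ≤ ρ) :
    bornProb A ρ ≤ bornProb B ρ := by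
  rw [← sub_nonneg, ← LinearMap.sub_apply, ← map_sub]
  exact bornProb_nonneg (sub_nonneg.2 hAB) hρ

lemma bornProb_mono_right {A ρ σ : Matrix κ κ ℂ} (hA : 0 ≤ A) (h : ρ ≤ σ) :
    bornProb A ρ ≤ bornProb A σ := by
  rw [← sub_nonneg, ← map_sub]
  exact bornProb_nonneg hA (sub_nonneg.2 h)

lemma bornProb_conjugate (A B ρ : Matrix κ κ ℂ) :
    bornProb (B * A * B) ρ = bornProb A (B * ρ * B) := by
  rw [bornProb_apply, bornProb_apply, mul_assoc, mul_assoc, trace_mul_comm]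
  simp only [mul_assoc]

lemma IsState.nonneg {ρ : Matrix κ κ ℂ} (hρ : IsState ρ) : 0 ≤ ρ := hρ.1.nonneg

lemma isState_mean {X : Type*} [Fintype X] {P : X → ℝ} (hP : IsDist P) {ρ : X → Matrix κ κ ℂ}
    (hρ : ∀ x, IsState (ρ x)) : IsState (mean P ρ) := by
  refine ⟨(Finset.sum_nonneg fun x _ => smul_nonneg (hP.1 x) (hρ x).nonneg).posSemidef, ?_⟩
  simp only [mean, trace_sum, trace_smul, (hρ _).2, ← Finset.sum_smul, hP.2, one_smul]

variable [DecidableEq κ]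

lemma IsState.bornProb_one {ρ : Matrix κ κ ℂ} (hρ : IsState ρ) : bornProb 1 ρ = 1 := by
  rw [bornProb_apply, one_mul, hρ.2, Complex.one_re]

end BornRule

section SpectralProjections

variable {κ : Type*} [Fintype κ] [DecidableEq κ]

lemma continuousOn_spectrum (f : ℝ → ℝ) (A : Matrix κ κ ℂ) : ContinuousOn f (spectrum ℝ A) :=
  A.finite_real_spectrum.continuousOn f

/-- The projection onto the span of the eigenvectors of `ρ` whose eigenvalue lies in `s`. -/
def spectralProj (ρ : Matrix κ κ ℂ) (s : Set ℝ) : Matrix κ κ ℂ := cfc (s.indicator 1) ρ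

lemma isStarProjection_spectralProj (ρ : Matrix κ κ ℂ) (s : Set ℝ) :
    IsStarProjection (spectralProj ρ s) := by
  refine ⟨?_, cfc_predicate _ _⟩
  rw [IsIdempotentElem, spectralProj,
    ← cfc_mul _ _ ρ (continuousOn_spectrum _ _) (continuousOn_spectrum _ _)]
  congr 1
  funext x
  by_cases hx : x ∈ s <;> simp [hx]

lemma spectralProj_nonneg (ρ : Matrix κ κ ℂ) (s : Set ℝ) : 0 ≤ spectralProj ρ s :=
  (isStarProjection_spectralProj ρ s).nonneg

lemma spectralProj_le_one (ρ : Matrix κ κ ℂ) (s : Set ℝ) : spectralProj ρ s ≤ 1 :=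
  (isStarProjection_spectralProj ρ s).le_one

lemma one_sub_spectralProj {ρ : Matrix κ κ ℂ} (hρ : IsSelfAdjoint ρ) (s : Set ℝ) :
    1 - spectralProj ρ s = spectralProj ρ sᶜ := by
  rw [spectralProj, spectralProj, ← cfc_one ℝ ρ,
    ← cfc_sub _ _ ρ (continuousOn_spectrum _ _) (continuousOn_spectrum _ _), Set.indicator_compl]
  rfl

lemma spectralProj_mul_self {ρ : Matrix κ κ ℂ} (hρ : IsSelfAdjoint ρ) (s : Set ℝ) :
    spectralProj ρ s * ρ = cfc (s.indicator id) ρ := by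
  have hid : spectralProj ρ s * ρ = spectralProj ρ s * cfc (id : ℝ → ℝ) ρ := by rw [cfc_id ℝ ρ]
  rw [hid, spectralProj,
    ← cfc_mul _ _ ρ (continuousOn_spectrum _ _) (continuousOn_spectrum _ _)]
  congr 1
  funext x
  by_cases hx : x ∈ s <;> simp [hx]

lemma bornProb_spectralProj_Ici_one_le {ρ : Matrix κ κ ℂ} (hρ : IsState ρ) {b : ℝ} (hb : 0 < b) :
    bornProb (spectralProj ρ (Set.Ici b)) 1 ≤ b⁻¹ := by
  have hle : spectralProj ρ (Set.Ici b) ≤ b⁻¹ • ρ := by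
    rw [← cfc_const_mul_id b⁻¹ ρ (.of_nonneg hρ.nonneg)]
    refine cfc_mono (fun x hx => ?_) (continuousOn_spectrum _ _)
    have hx0 : 0 ≤ x := spectrum_nonneg_of_nonneg hρ.nonneg hx
    refine Set.indicator_apply_le' (fun hbx => ?_) fun _ => by positivity
    rw [Pi.one_apply, inv_mul_eq_div, one_le_div hb]
    exact hbx
  calc bornProb (spectralProj ρ (Set.Ici b)) 1
      ≤ bornProb (b⁻¹ • ρ) 1 := bornProb_mono_left hle zero_le_one
    _ = b⁻¹ := by simp [bornProb_apply, hρ.2]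

lemma spectralProj_Iic_conjugate_le {ρ : Matrix κ κ ℂ} (hρ : IsSelfAdjoint ρ) {a : ℝ}
    (ha : 0 ≤ a) :
    spectralProj ρ (Set.Iic a) * ρ * spectralProj ρ (Set.Iic a) ≤ a • 1 := by
  rw [spectralProj_mul_self hρ, spectralProj,
    ← cfc_mul _ _ ρ (continuousOn_spectrum _ _) (continuousOn_spectrum _ _),
    ← Algebra.algebraMap_eq_smul_one]
  refine cfc_le_algebraMap _ _ _ (fun x _ => ?_) (continuousOn_spectrum _ _)
  by_cases hx : x ≤ a <;> simp [hx, ha]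

end SpectralProjections

section Packing

variable {κ X J : Type*} [Fintype κ] [DecidableEq κ] [Fintype X] [Fintype J]
  {P : X → ℝ} {ρ : X → Matrix κ κ ℂ} {η : ℝ}

/-- Hayashi–Nagaoka turns pairwise independence of the codewords into an error bound: the average
of `T (c i)` against `ρ (c j)` for `i ≠ j` only sees the average state. -/
lemma mean_error_sqrtMeasurement_le [DecidableEq J] (hP : IsDist P) (hρ : ∀ x, IsState (ρ x))
    {T : X → Matrix κ κ ℂ} (hT0 : ∀ x, 0 ≤ T x) (hT1 : ∀ x, T x ≤ 1) {β : ℝ}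
    (hβ : ∀ x, bornProb (T x) (mean P ρ) ≤ β) (hη : 0 < η) (j : J) :
    mean (iidDist P) (fun c : J → X =>
        bornProb (1 - sqrtMeasurement η (fun i => T (c i)) j) (ρ (c j))) ≤
      2 * mean P (fun x => bornProb (1 - T x) (ρ x)) + 4 * ((Fintype.card J - 1) * β + η) := by
  have hpoint (c : J → X) : bornProb (1 - sqrtMeasurement η (fun i => T (c i)) j) (ρ (c j)) ≤
      2 * bornProb (1 - T (c j)) (ρ (c j)) +
        4 * (∑ i ∈ Finset.univ.erase j, bornProb (T (c i)) (ρ (c j)) + η) := by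
    refine (bornProb_mono_left (one_sub_sqrtMeasurement_le (T := fun i => T (c i))
      (fun i => hT0 _) hη (hT1 _)) (hρ _).nonneg).trans_eq ?_
    simp only [map_add, map_smul, map_sum, LinearMap.add_apply, LinearMap.smul_apply,
      LinearMap.sum_apply, smul_eq_mul, (hρ _).bornProb_one, mul_one]
  have hfalse (i : J) (hi : i ∈ Finset.univ.erase j) :
      mean (iidDist P) (fun c : J → X => bornProb (T (c i)) (ρ (c j))) ≤ β := by
    rw [hP.mean_iidDist_apply₂ (Finset.ne_of_mem_erase hi) fun x y => bornProb (T x) (ρ y)]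
    simp only [← map_mean]
    exact (hP.mean_mono hβ).trans_eq (hP.mean_const β)
  refine (hP.iid.mean_mono hpoint).trans ?_
  rw [mean_add, mean_const_mul, mean_const_mul, mean_add, mean_sum, hP.iid.mean_const,
    hP.mean_iidDist_apply j fun x => bornProb (1 - T x) (ρ x)]
  have hcard : ∑ _ ∈ Finset.univ.erase j, β = (Fintype.card J - 1) * β := by
    rw [Finset.sum_const, Finset.card_erase_of_mem (Finset.mem_univ j), Finset.card_univ,
      nsmul_eq_mul, Nat.cast_pred (Fintype.card_pos_iff.2 ⟨j⟩)]
  rw [← hcard]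
  gcongr with i hi
  exact hfalse i hi

/-- The decoding test for the signal `τ` of a channel with average output `σ`. Only the bounds
`≤ a` for the eigenvalues of `σ` and `≥ b` for those of `τ` are needed, so the usual two-sided
typicality windows are replaced by half-lines. -/
def typicalTest (σ τ : Matrix κ κ ℂ) (a b : ℝ) : Matrix κ κ ℂ :=
  spectralProj σ (Set.Iic a) * spectralProj τ (Set.Ici b) * spectralProj σ (Set.Iic a)

variable {σ τ : Matrix κ κ ℂ} {a b : ℝ}

lemma typicalTest_nonneg (σ τ : Matrix κ κ ℂ) (a b : ℝ) : 0 ≤ typicalTest σ τ a b :=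
  conjugate_nonneg_of_nonneg (spectralProj_nonneg τ _) (spectralProj_nonneg σ _)

lemma typicalTest_le_one (σ τ : Matrix κ κ ℂ) (a b : ℝ) : typicalTest σ τ a b ≤ 1 :=
  calc typicalTest σ τ a b
      ≤ spectralProj σ (Set.Iic a) * 1 * spectralProj σ (Set.Iic a) :=
        conjugate_le_conjugate_of_nonneg (spectralProj_le_one _ _) (spectralProj_nonneg _ _)
    _ = spectralProj σ (Set.Iic a) := by
        rw [mul_one, (isStarProjection_spectralProj σ _).isIdempotentElem.eq]
    _ ≤ 1 := spectralProj_le_one _ _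

lemma bornProb_one_sub_typicalTest_le (hτ : IsState τ) (hη : 0 < η) :
    bornProb (1 - typicalTest σ τ a b) τ ≤
      bornProb (1 - spectralProj τ (Set.Ici b)) τ + η +
        η⁻¹ * bornProb (1 - spectralProj σ (Set.Iic a)) τ := by
  refine (bornProb_mono_left (one_sub_conjugate_le (spectralProj_nonneg _ _)
    (spectralProj_le_one _ _) (spectralProj_nonneg _ _) (spectralProj_le_one _ _) hη)
    hτ.nonneg).trans_eq ?_
  simp only [(isStarProjection_spectralProj σ _).isIdempotentElem.eq, map_add, map_smul,
    LinearMap.add_apply, LinearMap.smul_apply, smul_eq_mul, hτ.bornProb_one, mul_one]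

lemma bornProb_typicalTest_le (hσ : IsSelfAdjoint σ) (hτ : IsState τ) (ha : 0 ≤ a) (hb : 0 < b) :
    bornProb (typicalTest σ τ a b) σ ≤ a / b :=
  calc bornProb (typicalTest σ τ a b) σ
      = bornProb (spectralProj τ (Set.Ici b))
          (spectralProj σ (Set.Iic a) * σ * spectralProj σ (Set.Iic a)) := bornProb_conjugate _ _ _
    _ ≤ bornProb (spectralProj τ (Set.Ici b)) (a • 1) :=
        bornProb_mono_right (spectralProj_nonneg _ _) (spectralProj_Iic_conjugate_le hσ ha)
    _ = a * bornProb (spectralProj τ (Set.Ici b)) 1 := by rw [map_smul, smul_eq_mul]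
    _ ≤ a * b⁻¹ := by gcongr; exact bornProb_spectralProj_Ici_one_le hτ hb
    _ = a / b := (div_eq_mul_inv a b).symm

/-- The decoder of a random codebook `c` for the cq channel `ρ` with input distribution `P`. -/
def typicalDecoder (P : X → ℝ) (ρ : X → Matrix κ κ ℂ) (a b η : ℝ) (c : J → X) :
    J → Matrix κ κ ℂ :=
  sqrtMeasurement η fun i => typicalTest (mean P ρ) (ρ (c i)) a b

/-- Bounds the mean error of the random code with `k` codewords decoded by `typicalDecoder`, in
terms of the probabilities that the signal, resp. the average state, fails its spectral test. -/
def packingBound (P : X → ℝ) (ρ : X → Matrix κ κ ℂ) (a b η : ℝ) (k : ℕ) : ℝ :=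
  2 * mean P (fun x => bornProb (1 - spectralProj (ρ x) (Set.Ici b)) (ρ x)) +
    2 * η⁻¹ * bornProb (1 - spectralProj (mean P ρ) (Set.Iic a)) (mean P ρ) +
    4 * (k - 1) * (a / b) + 6 * η

lemma isPOVM_typicalDecoder (P : X → ℝ) (ρ : X → Matrix κ κ ℂ) (a b : ℝ) (hη : 0 < η)
    (c : J → X) : IsPOVM (typicalDecoder P ρ a b η c) :=
  ⟨fun j => (sqrtMeasurement_nonneg (fun _ => typicalTest_nonneg _ _ _ _) j).posSemidef,
    sum_sqrtMeasurement_le_one (fun _ => typicalTest_nonneg _ _ _ _) hη⟩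

lemma mean_error_typicalDecoder_le [DecidableEq J] (hP : IsDist P) (hρ : ∀ x, IsState (ρ x))
    (ha : 0 ≤ a) (hb : 0 < b) (hη : 0 < η) (j : J) :
    mean (iidDist P) (fun c : J → X => bornProb (1 - typicalDecoder P ρ a b η c j) (ρ (c j))) ≤
      packingBound P ρ a b η (Fintype.card J) := by
  have hmiss := hP.mean_mono fun x =>
    bornProb_one_sub_typicalTest_le (σ := mean P ρ) (a := a) (b := b) (hρ x) hη
  rw [mean_add, mean_add, mean_const_mul, hP.mean_const, ← map_mean] at hmiss
  refine (mean_error_sqrtMeasurement_le hP hρ (fun x => typicalTest_nonneg _ _ _ _)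
    (fun x => typicalTest_le_one _ _ _ _)
    (fun x => bornProb_typicalTest_le (.of_nonneg (isState_mean hP hρ).nonneg) (hρ x) ha hb)
    hη j).trans ?_
  rw [packingBound]
  linarith

end Packing

section SequentialDecoding

variable {κ J₁ J₂ : Type*} [Fintype κ] [DecidableEq κ]

lemma IsPOVM.nonneg [Fintype J₁] {E : J₁ → Matrix κ κ ℂ} (hE : IsPOVM E) (j : J₁) : 0 ≤ E j :=
  (hE.1 j).nonneg

lemma IsPOVM.sum_le_one [Fintype J₁] {E : J₁ → Matrix κ κ ℂ} (hE : IsPOVM E) : ∑ j, E j ≤ 1 := hE.2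

lemma IsPOVM.le_one [Fintype J₁] {E : J₁ → Matrix κ κ ℂ} (hE : IsPOVM E) (j : J₁) : E j ≤ 1 :=
  (Finset.single_le_sum (fun i _ => hE.nonneg i) (Finset.mem_univ j)).trans hE.sum_le_one

/-- Measure `E` first and then, given its outcome `j`, measure `F j` on the post-measurement
state. -/
def sequentialDecoder (E : J₁ → Matrix κ κ ℂ) (F : J₁ → J₂ → Matrix κ κ ℂ) (m : J₁ × J₂) :
    Matrix κ κ ℂ :=
  CFC.sqrt (E m.1) * F m.1 m.2 * CFC.sqrt (E m.1)

variable [Fintype J₁] [Fintype J₂] {E : J₁ → Matrix κ κ ℂ} {F : J₁ → J₂ → Matrix κ κ ℂ}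

lemma IsPOVM.sequentialDecoder (hE : IsPOVM E) (hF : ∀ j, IsPOVM (F j)) :
    IsPOVM (sequentialDecoder E F) := by
  refine ⟨fun m => (conjugate_nonneg_of_nonneg ((hF _).nonneg _) (CFC.sqrt_nonneg _)).posSemidef,
    show ∑ m, _root_.sequentialDecoder E F m ≤ 1 from ?_⟩
  rw [Fintype.sum_prod_type]
  refine (Finset.sum_le_sum fun j _ => ?_).trans hE.sum_le_one
  calc ∑ k, CFC.sqrt (E j) * F j k * CFC.sqrt (E j)
      = CFC.sqrt (E j) * (∑ k, F j k) * CFC.sqrt (E j) := by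
        rw [Finset.mul_sum, Finset.sum_mul]
    _ ≤ CFC.sqrt (E j) * 1 * CFC.sqrt (E j) :=
        conjugate_le_conjugate_of_nonneg (hF j).sum_le_one (CFC.sqrt_nonneg _)
    _ = E j := by rw [mul_one, CFC.sqrt_mul_sqrt_self _ (hE.nonneg j)]

lemma bornProb_one_sub_sequentialDecoder_le (hE : IsPOVM E) (hF : ∀ j, IsPOVM (F j))
    {ρ : Matrix κ κ ℂ} (hρ : IsState ρ) {t : ℝ} (ht : 0 < t) (m : J₁ × J₂) :
    bornProb (1 - sequentialDecoder E F m) ρ ≤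
      bornProb (1 - F m.1 m.2) ρ + t + t⁻¹ * bornProb (1 - E m.1) ρ := by
  have hsqrt : CFC.sqrt (E m.1) ≤ 1 := by
    simpa only [CFC.sqrt_one] using CFC.sqrt_le_sqrt _ _ (hE.le_one m.1)
  have hgentle := one_sub_conjugate_le (CFC.sqrt_nonneg (E m.1)) hsqrt ((hF m.1).nonneg m.2)
    ((hF m.1).le_one m.2) ht
  rw [CFC.sqrt_mul_sqrt_self _ (hE.nonneg m.1)] at hgentle
  have hborn := bornProb_mono_left hgentle hρ.nonneg
  simp only [map_add, map_smul, LinearMap.add_apply,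
    LinearMap.smul_apply, smul_eq_mul, hρ.bornProb_one, mul_one] at hborn
  exact hborn

variable {X₁ X₂ : Type*} [Fintype X₁] [Fintype X₂]

/-- The successive decoder of the codebooks `u`, `v`: the first message is decoded by averaging
over the second input, the second one with knowledge of the first codeword. -/
def successiveDecoder (P₁ : X₁ → ℝ) (P₂ : X₂ → ℝ) (ρ : X₁ → X₂ → Matrix κ κ ℂ)
    (a₁ b₁ a₂ b₂ η : ℝ) (u : J₁ → X₁) (v : J₂ → X₂) : J₁ × J₂ → Matrix κ κ ℂ :=
  sequentialDecoder (typicalDecoder P₁ (fun x => mean P₂ (ρ x)) a₁ b₁ η u)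
    fun j => typicalDecoder P₂ (ρ (u j)) a₂ b₂ η v

/-- Bounds the mean error of `successiveDecoder` for random codebooks of sizes `k₁` and `k₂`. -/
def successiveBound (P₁ : X₁ → ℝ) (P₂ : X₂ → ℝ) (ρ : X₁ → X₂ → Matrix κ κ ℂ)
    (a₁ b₁ a₂ b₂ η t : ℝ) (k₁ k₂ : ℕ) : ℝ :=
  mean P₁ (fun x => packingBound P₂ (ρ x) a₂ b₂ η k₂) + t +
    t⁻¹ * packingBound P₁ (fun x => mean P₂ (ρ x)) a₁ b₁ η k₁

variable {P₁ : X₁ → ℝ} {P₂ : X₂ → ℝ} {ρ : X₁ → X₂ → Matrix κ κ ℂ} {a₁ b₁ a₂ b₂ η t : ℝ}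

lemma mean_error_successiveDecoder_le [DecidableEq J₁] [DecidableEq J₂] (hP₁ : IsDist P₁)
    (hP₂ : IsDist P₂) (hρ : ∀ x y, IsState (ρ x y)) (ha₁ : 0 ≤ a₁) (hb₁ : 0 < b₁) (ha₂ : 0 ≤ a₂)
    (hb₂ : 0 < b₂) (hη : 0 < η) (ht : 0 < t) (m : J₁ × J₂) :
    mean (iidDist P₁) (fun u : J₁ → X₁ => mean (iidDist P₂) fun v : J₂ → X₂ =>
        bornProb (1 - successiveDecoder P₁ P₂ ρ a₁ b₁ a₂ b₂ η u v m) (ρ (u m.1) (v m.2))) ≤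
      successiveBound P₁ P₂ ρ a₁ b₁ a₂ b₂ η t (Fintype.card J₁) (Fintype.card J₂) := by
  have hsecond (u : J₁ → X₁) : mean (iidDist P₂) (fun v : J₂ → X₂ =>
      bornProb (1 - successiveDecoder P₁ P₂ ρ a₁ b₁ a₂ b₂ η u v m) (ρ (u m.1) (v m.2))) ≤
      packingBound P₂ (ρ (u m.1)) a₂ b₂ η (Fintype.card J₂) + t +
        t⁻¹ * bornProb (1 - typicalDecoder P₁ (fun x => mean P₂ (ρ x)) a₁ b₁ η u m.1)
          (mean P₂ (ρ (u m.1))) := by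
    refine (hP₂.iid.mean_mono fun v => bornProb_one_sub_sequentialDecoder_le
      (isPOVM_typicalDecoder _ _ _ _ hη u) (fun j => isPOVM_typicalDecoder _ _ _ _ hη v)
      (hρ _ _) ht m).trans ?_
    rw [mean_add, mean_add, mean_const_mul, hP₂.iid.mean_const,
      hP₂.mean_iidDist_apply m.2 fun y => bornProb _ (ρ (u m.1) y), ← map_mean]
    gcongr
    exact mean_error_typicalDecoder_le hP₂ (hρ _) ha₂ hb₂ hη m.2
  refine (hP₁.iid.mean_mono hsecond).trans ?_
  rw [mean_add, mean_add, mean_const_mul, hP₁.iid.mean_const,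
    hP₁.mean_iidDist_apply m.1 fun x => packingBound P₂ (ρ x) a₂ b₂ η _, successiveBound]
  gcongr
  exact mean_error_typicalDecoder_le hP₁ (fun x => isState_mean hP₂ (hρ x)) ha₁ hb₁ hη m.1

lemma exists_code_le_successiveBound (hP₁ : IsDist P₁) (hP₂ : IsDist P₂)
    (hρ : ∀ x y, IsState (ρ x y)) (ha₁ : 0 ≤ a₁) (hb₁ : 0 < b₁) (ha₂ : 0 ≤ a₂) (hb₂ : 0 < b₂)
    (hη : 0 < η) (ht : 0 < t) {k₁ k₂ : ℕ} (hk₁ : 0 < k₁) (hk₂ : 0 < k₂) :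
    ∃ (u : Fin k₁ → X₁) (v : Fin k₂ → X₂) (D : Fin k₁ × Fin k₂ → Matrix κ κ ℂ), IsPOVM D ∧
      (1 / ((k₁ : ℝ) * k₂)) * ∑ m, bornProb (1 - D m) (ρ (u m.1) (v m.2)) ≤
        successiveBound P₁ P₂ ρ a₁ b₁ a₂ b₂ η t k₁ k₂ := by
  let err (u : Fin k₁ → X₁) (v : Fin k₂ → X₂) : ℝ := (1 / ((k₁ : ℝ) * k₂)) *
    ∑ m, bornProb (1 - successiveDecoder P₁ P₂ ρ a₁ b₁ a₂ b₂ η u v m) (ρ (u m.1) (v m.2))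
  have hmean : mean (iidDist P₁) (fun u => mean (iidDist P₂) (err u)) ≤
      successiveBound P₁ P₂ ρ a₁ b₁ a₂ b₂ η t k₁ k₂ := by
    simp only [err, mean_const_mul, mean_sum]
    rw [one_div, inv_mul_le_iff₀ (by positivity)]
    refine (Finset.sum_le_card_nsmul _ _ _ fun m _ =>
      mean_error_successiveDecoder_le hP₁ hP₂ hρ ha₁ hb₁ ha₂ hb₂ hη ht m).trans_eq ?_
    simp
  obtain ⟨u, hu⟩ := hP₁.iid.exists_le_mean fun u => mean (iidDist P₂) (err u)
  obtain ⟨v, hv⟩ := hP₂.iid.exists_le_mean (err u)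
  exact ⟨u, v, _, .sequentialDecoder (isPOVM_typicalDecoder _ _ _ _ hη u)
    fun j => isPOVM_typicalDecoder _ _ _ _ hη v, hv.trans (hu.trans hmean)⟩

end SequentialDecoding

section WeakLaw

variable {Ω M : Type*} [Fintype Ω] [Fintype M] [DecidableEq M] {P : Ω → ℝ}

lemma IsDist.mean_iidDist_sum_sq (hP : IsDist P) {g : Ω → ℝ} (hg : mean P g = 0) :
    mean (iidDist P) (fun ω : M → Ω => (∑ i, g (ω i)) ^ 2) =
      Fintype.card M * mean P fun ω => g ω ^ 2 := by
  have hcov (i j : M) : mean (iidDist P) (fun ω : M → Ω => g (ω i) * g (ω j)) =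
      if i = j then mean P (fun ω => g ω ^ 2) else 0 := by
    split_ifs with hij
    · subst hij
      simp only [← sq, hP.mean_iidDist_apply i fun x => g x ^ 2]
    · simp only [hP.mean_iidDist_apply₂ hij fun x y => g x * g y, mean_const_mul, hg, mul_zero,
        hP.mean_const]
  simp only [sq (∑ _, _), Finset.sum_mul_sum, mean_sum, hcov, Finset.sum_ite_eq, Finset.mem_univ,
    if_true, Finset.sum_const, Finset.card_univ, nsmul_eq_mul]

lemma IsDist.chebyshev (hP : IsDist P) (f : Ω → ℝ) {c : ℝ} (hc : 0 < c) :
    mean (iidDist P) ({ω : M → Ω | c ≤ |∑ i, f (ω i) - Fintype.card M * mean P f|}.indicator 1) ≤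
      Fintype.card M * mean P (fun ω => (f ω - mean P f) ^ 2) / c ^ 2 := by
  have hcentered : mean P (fun ω => f ω - mean P f) = 0 := by
    rw [mean_sub, hP.mean_const, sub_self]
  rw [← hP.mean_iidDist_sum_sq hcentered, div_eq_inv_mul, ← mean_const_mul (iidDist P)]
  refine hP.iid.mean_mono fun ω : M → Ω =>
    Set.indicator_apply_le' (fun hω => ?_) fun _ => by positivity
  have hsum : ∑ i, (f (ω i) - mean P f) = ∑ i, f (ω i) - Fintype.card M * mean P f := by
    simp
  rw [Pi.one_apply, hsum, ← div_eq_inv_mul, one_le_div (by positivity), sq_le_sq, abs_of_pos hc]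
  exact hω

lemma IsDist.weak_law (hP : IsDist P) (f : Ω → ℝ) {δ e : ℝ} (hδ : 0 < δ) (he : 0 < e) :
    ∀ᶠ n : ℕ in atTop, mean (iidDist P)
      ({ω : Fin n → Ω | n * δ ≤ |∑ k, f (ω k) - n * mean P f|}.indicator 1) ≤ e := by
  set v := mean P fun ω => (f ω - mean P f) ^ 2 with hv
  have hlim : Tendsto (fun n : ℕ => v / δ ^ 2 / n) atTop (𝓝 0) :=
    tendsto_const_div_atTop_nhds_zero_nat _
  filter_upwards [hlim.eventually_le_const he, eventually_gt_atTop 0] with n hn hn0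
  have hcheb := hP.chebyshev (M := Fin n) f (c := n * δ) (by positivity)
  rw [Fintype.card_fin] at hcheb
  refine (hcheb.trans_eq ?_).trans hn
  rw [← hv]
  field_simp

end WeakLaw

section TensorPowers

variable {n : ℕ} {ι : Type*} [Fintype ι]

lemma tensorPow_mul (A B : Fin n → Matrix ι ι ℂ) :
    tensorPow A * tensorPow B = tensorPow fun k => A k * B k := by
  ext i j
  simp only [tensorPow, mul_apply, of_apply, Finset.prod_univ_sum, Fintype.piFinset_univ,
    Finset.prod_mul_distrib]

lemma conjTranspose_tensorPow (A : Fin n → Matrix ι ι ℂ) :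
    (tensorPow A)ᴴ = tensorPow fun k => (A k)ᴴ := by
  ext i j
  simp only [tensorPow, conjTranspose_apply, of_apply, star_prod]

lemma trace_tensorPow (A : Fin n → Matrix ι ι ℂ) : (tensorPow A).trace = ∏ k, (A k).trace := by
  simp only [trace, diag_apply, tensorPow, of_apply, Finset.prod_univ_sum, Fintype.piFinset_univ]

lemma mean_iidDist_tensorPow {X : Type*} [Fintype X] (P : X → ℝ) (V : Fin n → X → Matrix ι ι ℂ) :
    mean (iidDist P) (fun y : Fin n → X => tensorPow fun k => V k (y k)) =
      tensorPow fun k => mean P (V k) := by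
  ext i j
  simp only [mean, iidDist, tensorPow, Matrix.sum_apply, Matrix.smul_apply, of_apply,
    Finset.prod_univ_sum, Fintype.piFinset_univ, Complex.real_smul, Complex.ofReal_prod,
    Finset.prod_mul_distrib]

lemma isState_tensorPow {A : Fin n → Matrix ι ι ℂ} (hA : ∀ k, IsState (A k)) :
    IsState (tensorPow A) := by
  classical
  refine ⟨?_, by simp only [trace_tensorPow, (hA _).2, Finset.prod_const_one]⟩
  have hroot (k : Fin n) : (CFC.sqrt (A k))ᴴ * CFC.sqrt (A k) = A k := by
    rw [(CFC.sqrt_nonneg (A k)).posSemidef.1.eq, CFC.sqrt_mul_sqrt_self _ (hA k).nonneg]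
  have hsq : tensorPow A =
      (tensorPow fun k => CFC.sqrt (A k))ᴴ * tensorPow fun k => CFC.sqrt (A k) := by
    simp only [conjTranspose_tensorPow, tensorPow_mul, hroot]
  rw [hsq]
  exact posSemidef_conjTranspose_mul_self _

variable [DecidableEq ι]

lemma tensorPow_diagonal (d : Fin n → ι → ℂ) :
    tensorPow (fun k => diagonal (d k)) = diagonal fun j : Fin n → ι => ∏ k, d k (j k) := by
  ext i j
  rcases eq_or_ne i j with rfl | hij
  · simp [tensorPow]
  · obtain ⟨k, hk⟩ := Function.ne_iff.1 hij
    rw [diagonal_apply_ne _ hij]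
    exact Finset.prod_eq_zero (Finset.mem_univ k) (diagonal_apply_ne _ hk)

lemma charpoly_tensorPow {A : Fin n → Matrix ι ι ℂ} (hA : ∀ k, (A k).IsHermitian) :
    (tensorPow A).charpoly = ∏ j : Fin n → ι,
      (Polynomial.X - Polynomial.C ((∏ k, (hA k).eigenvalues (j k) : ℝ) : ℂ)) := by
  let U (k : Fin n) : Matrix ι ι ℂ := (hA k).eigenvectorUnitary
  let d (k : Fin n) (i : ι) : ℂ := (hA k).eigenvalues i
  have hspec (k : Fin n) : A k = U k * diagonal (d k) * (U k)ᴴ := by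
    have hdiag := (hA k).spectral_theorem
    rwa [Unitary.conjStarAlgAut_apply] at hdiag
  have hU (k : Fin n) : (U k)ᴴ * U k = 1 := Unitary.coe_star_mul_self _
  have hcyc : (tensorPow A).charpoly = (tensorPow fun k => diagonal (d k)).charpoly := by
    rw [funext hspec, ← tensorPow_mul, charpoly_mul_comm, tensorPow_mul]
    simp only [← mul_assoc, hU, one_mul]
  rw [hcyc, tensorPow_diagonal, charpoly_diagonal]
  simp only [d, Complex.ofReal_prod]

end TensorPowers

section Typicality

variable {κ : Type*} [Fintype κ] [DecidableEq κ]

lemma trace_cfc_of_charpoly_eq {A : Matrix κ κ ℂ} (hA : A.IsHermitian) {d : κ → ℝ}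
    (hd : A.charpoly = ∏ i, (Polynomial.X - Polynomial.C (d i : ℂ))) (f : ℝ → ℝ) :
    (cfc f A).trace.re = ∑ i, f (d i) := by
  have hroots : A.charpoly.roots = Finset.univ.val.map fun i => (d i : ℂ) := by
    rw [hd, Polynomial.roots_prod _ _
      (by simp [Finset.prod_ne_zero_iff, Polynomial.X_sub_C_ne_zero])]
    simp
  have heigenvalues : Finset.univ.val.map hA.eigenvalues = Finset.univ.val.map d := by
    simpa [Multiset.map_map, Function.comp_def] using congrArg (Multiset.map Complex.re)
      (hA.roots_charpoly_eq_eigenvalues.symm.trans hroots)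
  have htrace : (cfc f A).trace.re = ∑ i, f (hA.eigenvalues i) := by
    rw [hA.cfc_eq, IsHermitian.cfc, Unitary.conjStarAlgAut_apply, trace_mul_cycle]
    simp [trace_diagonal]
  rw [htrace]
  simpa [Multiset.map_map, Function.comp_def] using
    congrArg (fun s => (Multiset.map f s).sum) heigenvalues

lemma bornProb_one_sub_spectralProj {A : Matrix κ κ ℂ} (hA : A.IsHermitian) {d : κ → ℝ}
    (hd : A.charpoly = ∏ i, (Polynomial.X - Polynomial.C (d i : ℂ))) (s : Set ℝ) :
    bornProb (1 - spectralProj A s) A = mean d fun i => sᶜ.indicator 1 (d i) := by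
  rw [bornProb_apply, one_sub_spectralProj hA, spectralProj_mul_self hA,
    trace_cfc_of_charpoly_eq hA hd]
  refine Finset.sum_congr rfl fun i _ => ?_
  by_cases hi : d i ∈ sᶜ <;> simp [hi]

lemma IsState.isDist_eigenvalues {ρ : Matrix κ κ ℂ} (hρ : IsState ρ) :
    IsDist hρ.1.1.eigenvalues := by
  refine ⟨hρ.1.eigenvalues_nonneg, ?_⟩
  have htrace := congrArg Complex.re (hρ.1.1.trace_eq_sum_eigenvalues.symm.trans hρ.2)
  rwa [Complex.re_sum, Complex.one_re] at htrace

lemma IsState.vnEntropy_eq {ρ : Matrix κ κ ℂ} (hρ : IsState ρ) :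
    vnEntropy ρ = mean hρ.1.1.eigenvalues fun i => -Real.logb 2 (hρ.1.1.eigenvalues i) := by
  simp only [vnEntropy, dif_pos hρ.1.1, mean, smul_eq_mul, mul_neg, Finset.sum_neg_distrib]

lemma prod_mem_Icc_of_abs_sum_neg_logb_sub_lt {n : ℕ} {d : Fin n → ℝ} (hd : 0 < ∏ k, d k)
    {S δ : ℝ} (h : |∑ k, -Real.logb 2 (d k) - n * S| < n * δ) :
    ∏ k, d k ∈ Set.Icc ((2 : ℝ) ^ (-(n * (S + δ)))) (2 ^ (-(n * (S - δ)))) := by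
  have hlog : Real.logb 2 (∏ k, d k) = -∑ k, -Real.logb 2 (d k) := by
    rw [Real.logb_prod _ _ fun k hk => Finset.prod_ne_zero_iff.1 hd.ne' k hk,
      Finset.sum_neg_distrib, neg_neg]
  obtain ⟨hlower, hupper⟩ := abs_lt.1 h
  constructor
  · rw [← Real.le_logb_iff_rpow_le one_lt_two hd, hlog]
    linarith
  · rw [← Real.logb_le_iff_le_rpow one_lt_two hd, hlog]
    linarith

lemma IsDist.eventually_bornProb_one_sub_spectralProj_le {Z : Type*} [Fintype Z] {P : Z → ℝ}
    (hP : IsDist P) {V : Z → Matrix κ κ ℂ} (hV : ∀ z, IsState (V z)) {δ e : ℝ} (hδ : 0 < δ)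
    (he : 0 < e) :
    ∀ᶠ n : ℕ in atTop, ∀ s : Set ℝ,
      Set.Icc ((2 : ℝ) ^ (-(n * (mean P (fun z => vnEntropy (V z)) + δ))))
        (2 ^ (-(n * (mean P (fun z => vnEntropy (V z)) - δ)))) ⊆ s →
      mean (iidDist P) (fun z : Fin n → Z =>
        bornProb (1 - spectralProj (cqPow V n z) s) (cqPow V n z)) ≤ e := by
  let ev (z : Z) : κ → ℝ := (hV z).1.1.eigenvalues
  have hev (z : Z) : IsDist (ev z) := (hV z).isDist_eigenvalues
  have hentropy : mean P (fun z => vnEntropy (V z)) =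
      mean (fun p : Z × κ => P p.1 * ev p.1 p.2) fun p => -Real.logb 2 (ev p.1 p.2) := by
    rw [mean_prod]
    simp only [(hV _).vnEntropy_eq, ev]
  filter_upwards [(hP.prod hev).weak_law (fun p => -Real.logb 2 (ev p.1 p.2)) hδ he]
    with n hn s hs
  rw [mean_iidDist_prod] at hn
  refine (hP.iid.mean_mono fun z => ?_).trans hn
  rw [cqPow, bornProb_one_sub_spectralProj (isState_tensorPow fun k => hV (z k)).1.1
    (charpoly_tensorPow fun k => (hV (z k)).1.1)]
  refine (IsDist.pi fun k => hev (z k)).mean_mono_of_pos fun i hi => ?_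
  refine Set.indicator_apply_le' (fun hs' => ?_) fun _ => Set.indicator_nonneg (by simp) _
  have hdev : n * δ ≤
      |∑ k, -Real.logb 2 (ev (z k) (i k)) - n * mean P fun z => vnEntropy (V z)| :=
    not_lt.1 fun hlt => hs' (hs (prod_mem_Icc_of_abs_sum_neg_logb_sub_lt hi hlt))
  rw [hentropy] at hdev
  exact (if_pos hdev).ge

end Typicality

section CornerPoint

variable {Y₁ Y₂ Z X ι : Type*} [Fintype ι] [DecidableEq ι]

lemma holevo_eq [Fintype X] (P : X → ℝ) (V : X → Matrix ι ι ℂ) :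
    holevo P V = vnEntropy (mean P V) - mean P fun x => vnEntropy (V x) := by
  simp only [holevo, mean, Complex.coe_smul, smul_eq_mul]

lemma ceil_sub_one_mul_two_rpow_div_le (r s c : ℝ) :
    ((⌈(2 : ℝ) ^ (r - s - c)⌉₊ : ℝ) - 1) * (2 ^ (-r + c / 4) / 2 ^ (-s - c / 4)) ≤
      2 ^ (-(c / 2)) := by
  have hceil : (⌈(2 : ℝ) ^ (r - s - c)⌉₊ : ℝ) - 1 ≤ 2 ^ (r - s - c) :=
    sub_le_iff_le_add.2 (Nat.ceil_lt_add_one (by positivity)).le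
  refine (mul_le_mul_of_nonneg_right hceil (by positivity)).trans_eq ?_
  rw [← Real.rpow_sub two_pos, ← Real.rpow_add two_pos]
  ring_nf

lemma eventually_two_rpow_neg_le {c e : ℝ} (hc : 0 < c) (he : 0 < e) :
    ∀ᶠ n : ℕ in atTop, (2 : ℝ) ^ (-(n * c)) ≤ e := by
  have hlim : Tendsto (fun n : ℕ => ((2 : ℝ) ^ (-c)) ^ n) atTop (𝓝 0) :=
    tendsto_pow_atTop_nhds_zero_of_lt_one (by positivity)
      (Real.rpow_lt_one_of_one_lt_of_neg one_lt_two (neg_neg_of_pos hc))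
  filter_upwards [hlim.eventually_le_const he] with n hn
  rwa [← Real.rpow_mul_natCast two_pos.le, neg_mul, mul_comm c] at hn

lemma eventually_mean_packingBound_le [Fintype Z] [Fintype X] {P : Z → ℝ} {Q : X → ℝ}
    (hP : IsDist P) (hQ : IsDist Q) {V : Z → X → Matrix ι ι ℂ} (hV : ∀ z x, IsState (V z x))
    {δ η : ℝ} (hδ : 0 < δ) (hη : 0 < η) :
    ∀ᶠ n : ℕ in atTop, ∃ a b : ℝ, 0 ≤ a ∧ 0 < b ∧
      mean (iidDist P) (fun z : Fin n → Z =>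
        packingBound (iidDist Q) (fun x => tensorPow fun k => V (z k) (x k)) a b η
          ⌈(2 : ℝ) ^ (n * (mean P (fun z => holevo Q (V z)) - δ))⌉₊) ≤ 7 * η := by
  set S := mean P fun z => vnEntropy (mean Q (V z))
  set T := mean P fun z => mean Q fun x => vnEntropy (V z x)
  have hrate : mean P (fun z => holevo Q (V z)) = S - T := by simp only [holevo_eq, mean_sub, S, T]
  have hentropy : mean (fun p : Z × X => P p.1 * Q p.2) (fun p => vnEntropy (V p.1 p.2)) = T :=
    mean_prod P (fun _ => Q) _
  set e := η / (6 + 2 * η⁻¹) with he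
  have he0 : 0 < e := by positivity
  filter_upwards [(hP.prod fun _ => hQ).eventually_bornProb_one_sub_spectralProj_le
      (V := fun p => V p.1 p.2) (fun p => hV _ _) (δ := δ / 4) (by positivity) he0,
    hP.eventually_bornProb_one_sub_spectralProj_le (fun z => isState_mean hQ (hV z))
      (δ := δ / 4) (by positivity) he0,
    eventually_two_rpow_neg_le (half_pos hδ) he0] with n hsignal houtput hfalse
  rw [hentropy] at hsignal
  refine ⟨2 ^ (-(n * (S - δ / 4))), 2 ^ (-(n * (T + δ / 4))), by positivity, by positivity, ?_⟩
  have hsignal := hsignal _ Set.Icc_subset_Ici_self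
  have houtput := houtput _ Set.Icc_subset_Iic_self
  rw [mean_iidDist_prod P fun _ => Q] at hsignal
  have hcross : ((⌈(2 : ℝ) ^ (n * (S - T - δ))⌉₊ : ℝ) - 1) *
      (2 ^ (-(n * (S - δ / 4))) / 2 ^ (-(n * (T + δ / 4)))) ≤ e := by
    refine (le_of_eq ?_).trans
      ((ceil_sub_one_mul_two_rpow_div_le (n * S) (n * T) (n * δ)).trans ?_)
    · ring_nf
    · rwa [mul_div_assoc]
  have hsum : (2 * e + 2 * η⁻¹ * e + 4 * e) + 6 * η = 7 * η := by
    rw [he]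
    field_simp
    ring
  rw [← hsum, hrate]
  simp only [packingBound, mean_add, mean_const_mul, hP.iid.mean_const, mul_assoc (4 : ℝ),
    mean_iidDist_tensorPow]
  gcongr
  · exact hsignal
  · exact houtput

/-- The rate pair `(R₁, R₂)` is achievable over `W`: every slightly smaller pair of rates is
attained by codes of all large block lengths with arbitrarily small average error. -/
def IsAchievable (W : Y₁ → Y₂ → Matrix ι ι ℂ) (R₁ R₂ : ℝ) : Prop :=
  ∀ ε δ : ℝ, 0 < ε → 0 < δ → ∀ᶠ n : ℕ in atTop, ∃ J₁ J₂ : ℕ, 1 ≤ J₁ ∧ 1 ≤ J₂ ∧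
    n * (R₁ - δ) ≤ Real.logb 2 J₁ ∧ n * (R₂ - δ) ≤ Real.logb 2 J₂ ∧ MACCodeExists W n J₁ J₂ ε

lemma le_logb_ceil_two_rpow (x : ℝ) : x ≤ Real.logb 2 ⌈(2 : ℝ) ^ x⌉₊ := by
  rw [Real.le_logb_iff_rpow_le one_lt_two (by positivity)]
  exact Nat.le_ceil _

lemma isAchievable_corner [Fintype Y₁] [Fintype Y₂] {W : Y₁ → Y₂ → Matrix ι ι ℂ}
    (hW : ∀ x y, IsState (W x y)) {Q₁ : Y₁ → ℝ} {Q₂ : Y₂ → ℝ} (hQ₁ : IsDist Q₁)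
    (hQ₂ : IsDist Q₂) :
    IsAchievable W (holevo Q₁ fun x => mean Q₂ (W x)) (mean Q₁ fun x => holevo Q₂ (W x)) := by
  intro ε δ hε hδ
  set t := ε / 2 with ht
  set η := t / (7 * (1 + t⁻¹)) with hη
  have ht0 : 0 < t := by positivity
  have hη0 : 0 < η := by positivity
  have hunit : IsDist fun _ : Unit => (1 : ℝ) := ⟨fun _ => zero_le_one, by simp⟩
  filter_upwards [eventually_mean_packingBound_le hunit hQ₁
      (V := fun _ x => mean Q₂ (W x)) (fun _ x => isState_mean hQ₂ (hW x)) hδ hη0,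
    eventually_mean_packingBound_le hQ₁ hQ₂ hW hδ hη0] with n hfirst hsecond
  obtain ⟨a₁, b₁, ha₁, hb₁, hfirst⟩ := hfirst
  obtain ⟨a₂, b₂, ha₂, hb₂, hsecond⟩ := hsecond
  simp only [hunit.mean_const] at hfirst
  rw [hunit.iid.mean_const] at hfirst
  have hJ (x : ℝ) : 1 ≤ ⌈(2 : ℝ) ^ x⌉₊ := Nat.ceil_pos.2 (by positivity)
  obtain ⟨u, v, D, hD, herr⟩ := exists_code_le_successiveBound
    (ρ := fun (x : Fin n → Y₁) (y : Fin n → Y₂) => tensorPow fun k => W (x k) (y k))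
    hQ₁.iid hQ₂.iid (fun x y => isState_tensorPow fun k => hW _ _) ha₁ hb₁ ha₂ hb₂ hη0 ht0
    (hJ _) (hJ _)
  refine ⟨_, _, hJ _, hJ _, le_logb_ceil_two_rpow _, le_logb_ceil_two_rpow _, u, v, D, hD,
    herr.trans ?_⟩
  calc successiveBound _ _ _ _ _ _ _ _ _ _ _ ≤ 7 * η + t + t⁻¹ * (7 * η) := by
        simp only [successiveBound, mean_iidDist_tensorPow]
        gcongr
    _ = ε := by
        rw [hη]
        field_simp
        rw [ht]
        ring

end CornerPoint

section ProductCodes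

lemma sub_kronecker {l m n p α : Type*} [NonUnitalNonAssocRing α] (A A' : Matrix l m α)
    (B : Matrix n p α) : (A - A') ⊗ₖ B = A ⊗ₖ B - A' ⊗ₖ B := by
  ext
  simp only [kroneckerMap_apply, Matrix.sub_apply, sub_mul]

lemma kronecker_sub {l m n p α : Type*} [NonUnitalNonAssocRing α] (A : Matrix l m α)
    (B B' : Matrix n p α) : A ⊗ₖ (B - B') = A ⊗ₖ B - A ⊗ₖ B' := by
  ext
  simp only [kroneckerMap_apply, Matrix.sub_apply, mul_sub]

section KroneckerOrder

variable {κ κ' : Type*} [Finite κ] [Finite κ']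

lemma kronecker_nonneg {A : Matrix κ κ ℂ} {B : Matrix κ' κ' ℂ} (hA : 0 ≤ A) (hB : 0 ≤ B) :
    0 ≤ A ⊗ₖ B :=
  (hA.posSemidef.kronecker hB.posSemidef).nonneg

variable [DecidableEq κ] [DecidableEq κ']

lemma kronecker_le_one {A : Matrix κ κ ℂ} {B : Matrix κ' κ' ℂ} (hA : 0 ≤ A) (hA₁ : A ≤ 1)
    (hB₁ : B ≤ 1) : A ⊗ₖ B ≤ 1 := by
  have hsplit : 1 - A ⊗ₖ B = (1 - A) ⊗ₖ 1 + A ⊗ₖ (1 - B) := by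
    rw [sub_kronecker, kronecker_sub, one_kronecker_one]
    abel
  rw [← sub_nonneg, hsplit]
  exact add_nonneg (kronecker_nonneg (sub_nonneg.2 hA₁) PosSemidef.one.nonneg)
    (kronecker_nonneg hA (sub_nonneg.2 hB₁))

lemma one_sub_kronecker_le {A : Matrix κ κ ℂ} {B : Matrix κ' κ' ℂ} (hA₁ : A ≤ 1) (hB₁ : B ≤ 1) :
    1 - A ⊗ₖ B ≤ (1 - A) ⊗ₖ 1 + 1 ⊗ₖ (1 - B) := by
  have hdiff : (1 - A) ⊗ₖ 1 + 1 ⊗ₖ (1 - B) - (1 - A ⊗ₖ B) = (1 - A) ⊗ₖ (1 - B) := by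
    simp only [sub_kronecker, kronecker_sub, one_kronecker_one]
    abel
  rw [← sub_nonneg, hdiff]
  exact kronecker_nonneg (sub_nonneg.2 hA₁) (sub_nonneg.2 hB₁)

end KroneckerOrder

variable {κ κ' : Type*} [Fintype κ] [Fintype κ']

lemma bornProb_submatrix (A ρ : Matrix κ κ ℂ) (e : κ' ≃ κ) :
    bornProb (A.submatrix e e) (ρ.submatrix e e) = bornProb A ρ := by
  rw [bornProb_apply, bornProb_apply, submatrix_mul_equiv]
  exact congrArg Complex.re (e.sum_comp fun i => (A * ρ) i i)

variable [DecidableEq κ] [DecidableEq κ']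

lemma bornProb_one_sub_kronecker_le {A ρ : Matrix κ κ ℂ} {B σ : Matrix κ' κ' ℂ} (hA₁ : A ≤ 1)
    (hB₁ : B ≤ 1) (hρ : IsState ρ) (hσ : IsState σ) :
    bornProb (1 - A ⊗ₖ B) (ρ ⊗ₖ σ) ≤ bornProb (1 - A) ρ + bornProb (1 - B) σ := by
  refine (bornProb_mono_left (one_sub_kronecker_le hA₁ hB₁)
    (kronecker_nonneg hρ.nonneg hσ.nonneg)).trans_eq ?_
  simp only [map_add, LinearMap.add_apply, bornProb_apply, ← mul_kronecker_mul, trace_kronecker,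
    one_mul, hρ.2, hσ.2, mul_one]

namespace IsPOVM

variable {J J' : Type*} [Fintype J] [Fintype J'] {D : J → Matrix κ κ ℂ} {E : J' → Matrix κ' κ' ℂ}

lemma kronecker (hD : IsPOVM D) (hE : IsPOVM E) :
    IsPOVM fun m : J × J' => D m.1 ⊗ₖ E m.2 := by
  refine ⟨fun m => (hD.1 _).kronecker (hE.1 _), ?_⟩
  have hsum : ∑ m : J × J', D m.1 ⊗ₖ E m.2 = (∑ j, D j) ⊗ₖ ∑ j, E j := by
    ext
    simp only [Matrix.sum_apply, kroneckerMap_apply, Fintype.sum_prod_type, Finset.sum_mul_sum]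
  rw [hsum]
  exact kronecker_le_one (Finset.sum_nonneg fun j _ => hD.nonneg j) hD.sum_le_one hE.sum_le_one

lemma submatrix (hD : IsPOVM D) (e : κ' ≃ κ) : IsPOVM fun j => (D j).submatrix e e := by
  refine ⟨fun j => (hD.1 j).submatrix e, ?_⟩
  have hcompl : 1 - ∑ j, (D j).submatrix e e = (1 - ∑ j, D j).submatrix e e := by
    ext
    simp only [Matrix.sub_apply, Matrix.sum_apply, submatrix_apply, one_apply, e.injective.eq_iff]
  rw [loewnerLE, hcompl]
  exact hD.2.submatrix e

lemma comp_equiv (hD : IsPOVM D) (e : J' ≃ J) : IsPOVM fun j => D (e j) :=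
  ⟨fun j => hD.1 _, by simpa only [e.sum_comp D] using hD.2⟩

end IsPOVM

variable {Y₁ Y₂ ι : Type*} [Fintype ι] {a b : ℕ}

lemma tensorPow_add (M : Fin (a + b) → Matrix ι ι ℂ) :
    tensorPow M = ((tensorPow fun i => M (Fin.castAdd b i)) ⊗ₖ
      tensorPow fun i => M (Fin.natAdd a i)).submatrix
        (Fin.appendEquiv a b).symm (Fin.appendEquiv a b).symm := by
  ext i j
  simp only [tensorPow, of_apply, Fin.prod_univ_add, submatrix_apply, kroneckerMap_apply,
    Fin.appendEquiv_symm_apply]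

variable [DecidableEq ι]

lemma bornProb_append_le {W : Y₁ → Y₂ → Matrix ι ι ℂ} (hW : ∀ x y, IsState (W x y))
    {A : Matrix (Fin a → ι) (Fin a → ι) ℂ} {B : Matrix (Fin b → ι) (Fin b → ι) ℂ} (hA₁ : A ≤ 1)
    (hB₁ : B ≤ 1) (x : Fin a → Y₁) (x' : Fin b → Y₁) (y : Fin a → Y₂) (y' : Fin b → Y₂) :
    bornProb (1 - (A ⊗ₖ B).submatrix (Fin.appendEquiv a b).symm (Fin.appendEquiv a b).symm)
        (tensorPow fun k => W (Fin.append x x' k) (Fin.append y y' k)) ≤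
      bornProb (1 - A) (tensorPow fun k => W (x k) (y k)) +
        bornProb (1 - B) (tensorPow fun k => W (x' k) (y' k)) := by
  set e := (Fin.appendEquiv (α := ι) a b).symm
  have hcompl : 1 - (A ⊗ₖ B).submatrix e e = (1 - A ⊗ₖ B).submatrix e e := by
    rw [← submatrix_one_equiv e]
    rfl
  rw [tensorPow_add, hcompl, bornProb_submatrix]
  simp only [Fin.append_left, Fin.append_right]
  exact bornProb_one_sub_kronecker_le hA₁ hB₁ (isState_tensorPow fun _ => hW _ _)
    (isState_tensorPow fun _ => hW _ _)

namespace MACCodeExists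

variable {W : Y₁ → Y₂ → Matrix ι ι ℂ}

lemma append (hW : ∀ x y, IsState (W x y)) {J₁ J₂ K₁ K₂ : ℕ} {ε ε' : ℝ} (hJ₁ : 1 ≤ J₁)
    (hJ₂ : 1 ≤ J₂) (hK₁ : 1 ≤ K₁) (hK₂ : 1 ≤ K₂) (h : MACCodeExists W a J₁ J₂ ε)
    (h' : MACCodeExists W b K₁ K₂ ε') :
    MACCodeExists W (a + b) (J₁ * K₁) (J₂ * K₂) (ε + ε') := by
  obtain ⟨u, v, D, hD, herr⟩ := h
  obtain ⟨u', v', D', hD', herr'⟩ := h'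
  let split : Fin (J₁ * K₁) × Fin (J₂ * K₂) ≃ (Fin J₁ × Fin J₂) × (Fin K₁ × Fin K₂) :=
    (finProdFinEquiv.symm.prodCongr finProdFinEquiv.symm).trans (Equiv.prodProdProdComm ..)
  refine ⟨fun m => Fin.append (u (finProdFinEquiv.symm m).1) (u' (finProdFinEquiv.symm m).2),
    fun m => Fin.append (v (finProdFinEquiv.symm m).1) (v' (finProdFinEquiv.symm m).2), _,
    ((hD.kronecker hD').submatrix (Fin.appendEquiv a b).symm).comp_equiv split, ?_⟩
  let err m := bornProb (1 - D m) (tensorPow fun k => W (u m.1 k) (v m.2 k))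
  let err' m := bornProb (1 - D' m) (tensorPow fun k => W (u' m.1 k) (v' m.2 k))
  have hpos₁ : (0 : ℝ) < J₁ := by exact_mod_cast hJ₁
  have hpos₂ : (0 : ℝ) < J₂ := by exact_mod_cast hJ₂
  have hpos₁' : (0 : ℝ) < K₁ := by exact_mod_cast hK₁
  have hpos₂' : (0 : ℝ) < K₂ := by exact_mod_cast hK₂
  calc _ ≤ 1 / (((J₁ * K₁ : ℕ) : ℝ) * (J₂ * K₂ : ℕ)) *
        ∑ m, (err (split m).1 + err' (split m).2) := by
        gcongr with m
        exact bornProb_append_le hW (hD.le_one _) (hD'.le_one _) _ _ _ _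
    _ = 1 / (J₁ * J₂) * ∑ m, err m + 1 / (K₁ * K₂) * ∑ m, err' m := by
        rw [split.sum_comp fun m => err m.1 + err' m.2,
          Fintype.sum_prod_type (α₁ := Fin J₁ × Fin J₂)]
        simp only [Finset.sum_add_distrib, Finset.sum_const, Finset.card_univ, Fintype.card_prod,
          Fintype.card_fin, nsmul_eq_mul, ← Finset.mul_sum]
        push_cast
        field_simp
    _ ≤ ε + ε' := add_le_add herr herr'

lemma swap {n J₁ J₂ : ℕ} {ε : ℝ} (h : MACCodeExists (fun y x => W x y) n J₂ J₁ ε) :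
    MACCodeExists W n J₁ J₂ ε := by
  obtain ⟨u, v, D, hD, herr⟩ := h
  refine ⟨v, u, _, hD.comp_equiv (Equiv.prodComm _ _), ?_⟩
  rw [← (Equiv.prodComm _ _).sum_comp, mul_comm (J₂ : ℝ)] at herr
  exact herr

end MACCodeExists

end ProductCodes

section TimeSharing

lemma timeShare_rate_le {a b n : ℕ} (hab : a + b = n) {l r s δ : ℝ} (hal : (a : ℝ) ≤ l * n)
    (hla : l * n ≤ a + 1) (hn : |r - s| ≤ n * (δ / 2)) :
    n * (l * r + (1 - l) * s - δ) ≤ a * (r - δ / 2) + b * (s - δ / 2) := by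
  have hrounding : (l * n - a) * (r - s) ≤ |r - s| := by
    refine (mul_le_mul_of_nonneg_left (le_abs_self _) (sub_nonneg.2 hal)).trans ?_
    exact mul_le_of_le_one_left (abs_nonneg _) (by linarith)
  have hb : (b : ℝ) = n - a := by
    rw [← hab]
    push_cast
    ring
  rw [hb]
  linarith

lemma tendsto_sub_floor_mul_atTop {l : ℝ} (hl₀ : 0 ≤ l) (hl₁ : l < 1) :
    Tendsto (fun n : ℕ => n - ⌊l * n⌋₊) atTop atTop := by
  refine tendsto_natCast_atTop_iff (R := ℝ).1 ?_
  refine tendsto_atTop_mono (fun n => ?_)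
    (tendsto_natCast_atTop_atTop.const_mul_atTop (sub_pos.2 hl₁))
  have hfloor : (⌊l * n⌋₊ : ℝ) ≤ l * n := Nat.floor_le (by positivity)
  have hsub : (n : ℝ) ≤ (n - ⌊l * n⌋₊ : ℕ) + ⌊l * n⌋₊ := by exact_mod_cast le_tsub_add
  linarith

namespace IsAchievable

variable {Y₁ Y₂ ι : Type*} [Fintype ι] [DecidableEq ι] {W : Y₁ → Y₂ → Matrix ι ι ℂ}
  {r₁ r₂ s₁ s₂ : ℝ}

lemma swap (h : IsAchievable (fun y x => W x y) r₂ r₁) : IsAchievable W r₁ r₂ := by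
  intro ε δ hε hδ
  filter_upwards [h ε δ hε hδ] with n hn
  obtain ⟨J₂, J₁, hJ₂, hJ₁, hrate₂, hrate₁, hcode⟩ := hn
  exact ⟨J₁, J₂, hJ₁, hJ₂, hrate₁, hrate₂, hcode.swap⟩

lemma mono (h : IsAchievable W r₁ r₂) (h₁ : s₁ ≤ r₁) (h₂ : s₂ ≤ r₂) : IsAchievable W s₁ s₂ := by
  intro ε δ hε hδ
  filter_upwards [h ε δ hε hδ] with n hn
  obtain ⟨J₁, J₂, hJ₁, hJ₂, hrate₁, hrate₂, hcode⟩ := hn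
  exact ⟨J₁, J₂, hJ₁, hJ₂, le_trans (by gcongr) hrate₁, le_trans (by gcongr) hrate₂, hcode⟩

lemma timeShare (hW : ∀ x y, IsState (W x y)) (h : IsAchievable W r₁ r₂)
    (h' : IsAchievable W s₁ s₂) {l : ℝ} (hl₀ : 0 < l) (hl₁ : l < 1) :
    IsAchievable W (l * r₁ + (1 - l) * s₁) (l * r₂ + (1 - l) * s₂) := by
  intro ε δ hε hδ
  have hlarge (c : ℝ) : ∀ᶠ n : ℕ in atTop, c ≤ n * (δ / 2) :=
    (tendsto_natCast_atTop_atTop.atTop_mul_const (half_pos hδ)).eventually_ge_atTop c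
  have hfloor : Tendsto (fun n : ℕ => ⌊l * n⌋₊) atTop atTop :=
    tendsto_nat_floor_atTop.comp (tendsto_natCast_atTop_atTop.const_mul_atTop hl₀)
  filter_upwards [hfloor.eventually (h (ε / 2) (δ / 2) (half_pos hε) (half_pos hδ)),
    (tendsto_sub_floor_mul_atTop hl₀.le hl₁).eventually
      (h' (ε / 2) (δ / 2) (half_pos hε) (half_pos hδ)),
    hlarge |r₁ - s₁|, hlarge |r₂ - s₂|] with n hfst hsnd hdiff₁ hdiff₂
  obtain ⟨J₁, J₂, hJ₁, hJ₂, hrate₁, hrate₂, hcode⟩ := hfst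
  obtain ⟨K₁, K₂, hK₁, hK₂, hrate₁', hrate₂', hcode'⟩ := hsnd
  have hle : (⌊l * n⌋₊ : ℝ) ≤ l * n := Nat.floor_le (by positivity)
  have hlt : l * n ≤ ⌊l * n⌋₊ + 1 := (Nat.lt_floor_add_one _).le
  have hadd : ⌊l * n⌋₊ + (n - ⌊l * n⌋₊) = n :=
    Nat.add_sub_of_le (Nat.floor_le_of_le (mul_le_of_le_one_left n.cast_nonneg hl₁.le))
  have hlog {J K : ℕ} (hJ : 1 ≤ J) (hK : 1 ≤ K) :
      Real.logb 2 (J * K : ℕ) = Real.logb 2 J + Real.logb 2 K := by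
    rw [Nat.cast_mul, Real.logb_mul (by positivity) (by positivity)]
  refine ⟨J₁ * K₁, J₂ * K₂, Nat.mul_pos hJ₁ hK₁, Nat.mul_pos hJ₂ hK₂, ?_, ?_, ?_⟩
  · rw [hlog hJ₁ hK₁]
    exact (timeShare_rate_le hadd hle hlt hdiff₁).trans (add_le_add hrate₁ hrate₁')
  · rw [hlog hJ₂ hK₂]
    exact (timeShare_rate_le hadd hle hlt hdiff₂).trans (add_le_add hrate₂ hrate₂')
  · simpa only [hadd, add_halves] using hcode.append hW hJ₁ hJ₂ hK₁ hK₂ hcode'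

end IsAchievable

end TimeSharing

section Pentagon

variable {Y₁ Y₂ ι : Type*} [Fintype ι] [DecidableEq ι]

lemma IsAchievable.of_corners {W : Y₁ → Y₂ → Matrix ι ι ℂ} (hW : ∀ x y, IsState (W x y))
    {r₁ r₂ s₁ s₂ R₁ R₂ : ℝ} (h : IsAchievable W r₁ r₂) (h' : IsAchievable W s₁ s₂)
    (hface : r₁ + r₂ = s₁ + s₂) (h₁ : R₁ ≤ s₁) (h₂ : R₂ ≤ r₂) (h₁₂ : R₁ + R₂ ≤ r₁ + r₂) :
    IsAchievable W R₁ R₂ := by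
  rcases le_or_gt R₁ r₁ with hr₁ | hr₁
  · exact h.mono hr₁ h₂
  rcases h₁.eq_or_lt with hs₁ | hs₁
  · exact h'.mono h₁ (by linarith)
  have hpos : 0 < s₁ - r₁ := by linarith
  set l := (s₁ - R₁) / (s₁ - r₁)
  have hcancel : l * (s₁ - r₁) = s₁ - R₁ := div_mul_cancel₀ _ hpos.ne'
  have hR₁ : l * r₁ + (1 - l) * s₁ = R₁ := by linear_combination -hcancel
  have hR₂ : l * r₂ + (1 - l) * s₂ = r₁ + r₂ - R₁ := by
    linear_combination hcancel - (1 - l) * hface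
  exact (h.timeShare hW h' (div_pos (by linarith) hpos) ((div_lt_one hpos).2 (by linarith))).mono
    hR₁.ge (by linarith)

variable [Fintype Y₁] [Fintype Y₂] (Q₁ : Y₁ → ℝ) (Q₂ : Y₂ → ℝ) (W : Y₁ → Y₂ → Matrix ι ι ℂ)

lemma holevo_prod :
    holevo (fun p : Y₁ × Y₂ => Q₁ p.1 * Q₂ p.2) (fun p => W p.1 p.2) =
      holevo Q₁ (fun x => mean Q₂ (W x)) + mean Q₁ fun x => holevo Q₂ (W x) := by
  simp only [holevo_eq, mean_sub, mean_prod Q₁ fun _ => Q₂]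
  abel

lemma holevo_prod_swap :
    holevo (fun p : Y₁ × Y₂ => Q₁ p.1 * Q₂ p.2) (fun p => W p.1 p.2) =
      mean Q₂ (fun y => holevo Q₁ fun x => W x y) +
        holevo Q₂ fun y => mean Q₁ fun x => W x y := by
  simp only [holevo_eq, mean_sub, mean_prod Q₁ fun _ => Q₂, mean_comm Q₁ Q₂]
  abel

end Pentagon

end

/-- Achievability for the classical-quantum multiple-access channel. -/
theorem mac_achievability
    {Y1 Y2 ι : Type*} [Fintype Y1] [Fintype Y2] [Fintype ι] [DecidableEq ι]
    (W : Y1 → Y2 → Matrix ι ι ℂ) (hW : ∀ y1 y2, IsState (W y1 y2))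
    (Q1 : Y1 → ℝ) (Q2 : Y2 → ℝ) (hQ1 : IsDist Q1) (hQ2 : IsDist Q2)
    (R1 R2 : ℝ) (hR1 : 0 ≤ R1) (hR2 : 0 ≤ R2)
    (h1 : R1 ≤ ∑ y2, Q2 y2 * holevo Q1 (fun y1 => W y1 y2))
    (h2 : R2 ≤ ∑ y1, Q1 y1 * holevo Q2 (fun y2 => W y1 y2))
    (h12 : R1 + R2 ≤ holevo (fun p : Y1 × Y2 => Q1 p.1 * Q2 p.2) (fun p => W p.1 p.2))
    (ε δ : ℝ) (hε : 0 < ε) (hδ : 0 < δ) :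
    ∃ N : ℕ, ∀ n : ℕ, N ≤ n →
      ∃ J1 J2 : ℕ, 1 ≤ J1 ∧ 1 ≤ J2 ∧
        R1 - δ ≤ (1 / n : ℝ) * Real.logb 2 J1 ∧
        R2 - δ ≤ (1 / n : ℝ) * Real.logb 2 J2 ∧
        MACCodeExists W n J1 J2 ε := by
  have hcorner := isAchievable_corner hW hQ1 hQ2
  have hcorner' := (isAchievable_corner (fun y x => hW x y) hQ2 hQ1).swap
  have hR : IsAchievable W R1 R2 :=
    hcorner.of_corners hW hcorner' ((holevo_prod Q1 Q2 W).symm.trans (holevo_prod_swap Q1 Q2 W))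
      h1 h2 (h12.trans_eq (holevo_prod Q1 Q2 W))
  obtain ⟨N, hN⟩ := Filter.eventually_atTop.1
    ((hR ε δ hε hδ).and (Filter.eventually_gt_atTop 0))
  refine ⟨N, fun n hn => ?_⟩
  obtain ⟨⟨J1, J2, hJ1, hJ2, hrate1, hrate2, hcode⟩, hpos⟩ := hN n hn
  have hpos : (0 : ℝ) < n := Nat.cast_pos.2 hpos
  refine ⟨J1, J2, hJ1, hJ2, ?_, ?_, hcode⟩ <;>
    rwa [one_div_mul_eq_div, le_div_iff₀' hpos]
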